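/- Let R ⊆ S_n be a top-k partial ranking and let τ ∈ S_n be arbitrary. Then there is a unique closest element of R to τ in Kendall distance: the set argmin_{σ ∈ R} d(σ, τ) has exactly one element. -/

import Mathlib

/-- The Kendall (tau) distance between two permutations of `Fin n`:
the number of pairs `(x, y)` with `x < y` on which `σ⁻¹` and `τ⁻¹`
disagree in relative order. -/
def kendallDist {n : ℕ} (σ τ : Equiv.Perm (Fin n)) : ℕ :=
  (Finset.univ.filter (fun p : Fin n × Fin n =>
    p.1 < p.2 ∧ ¬((σ⁻¹ p.1 < σ⁻¹ p.2) ↔ (τ⁻¹ p.1 < τ⁻¹ p.2)))).card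

/-- The top-`k` partial ranking determined by the items `a 0, …, a (k-1)`:
the set of full rankings (permutations) `σ` with `σ i = a i` for the first
`k` positions. -/
def topkFinset {n k : ℕ} (hk : k ≤ n) (a : Fin k → Fin n) :
    Finset (Equiv.Perm (Fin n)) :=
  Finset.univ.filter fun σ => ∀ i : Fin k, σ (Fin.castLE hk i) = a i

/-- The permutation of `Fin n` fixing the first `k` positions and reversing
the order of the remaining `n - k` positions. -/
def revAfter (n k : ℕ) : Equiv.Perm (Fin n) :=
  Function.Involutive.toPerm
    (fun p => if _h : (p : ℕ) < k then p
      else ⟨n + k - 1 - (p : ℕ), by have := p.isLt; omega⟩)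
    (by
      intro p
      have hp := p.isLt
      by_cases h : (p : ℕ) < k
      · simp [h]
      · have h2 : ¬ (n + k - 1 - (p : ℕ) < k) := by omega
        simp only [dif_neg h, dif_neg h2]
        ext
        simp
        omega)

/-- The antithetic permutation of `σ` relative to a top-`k` partial ranking:
the first `k` positions are unchanged and the remaining positions are
reversed, i.e. `A σ (k+j) = σ (n+1-j)` (in 1-indexed notation). -/
def antithetic (n k : ℕ) (σ : Equiv.Perm (Fin n)) : Equiv.Perm (Fin n) :=
  σ * revAfter n k

theorem mem_topkFinset {n k : ℕ} {hk : k ≤ n} {a : Fin k → Fin n} {σ : Equiv.Perm (Fin n)} :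
    σ ∈ topkFinset hk a ↔ ∀ i : Fin k, σ (Fin.castLE hk i) = a i := by
  simp [topkFinset]

/-- A ranking of a top-`k` partial ranking places the item `a i` at position `i`. -/
theorem inv_apply_of_mem_topkFinset {n k : ℕ} {hk : k ≤ n} {a : Fin k → Fin n}
    {σ : Equiv.Perm (Fin n)} (hσ : σ ∈ topkFinset hk a) (i : Fin k) :
    σ⁻¹ (a i) = Fin.castLE hk i := by
  rw [Equiv.Perm.inv_eq_iff_eq, mem_topkFinset.1 hσ i]

/-- A ranking of a top-`k` partial ranking places the items outside the top `k` after the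
first `k` positions. -/
theorem le_inv_apply_of_mem_topkFinset {n k : ℕ} {hk : k ≤ n} {a : Fin k → Fin n}
    {σ : Equiv.Perm (Fin n)} (hσ : σ ∈ topkFinset hk a) {x : Fin n} (hx : x ∉ Set.range a) :
    k ≤ (σ⁻¹ x : ℕ) := by
  by_contra! h
  refine hx ⟨⟨σ⁻¹ x, h⟩, ?_⟩
  rw [← mem_topkFinset.1 hσ]
  simp

/-- Two rankings of the same top-`k` partial ranking agree on every pair of items that meets
the top `k`. -/
theorem inv_lt_inv_iff_of_mem_topkFinset {n k : ℕ} {hk : k ≤ n} {a : Fin k → Fin n}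
    {σ π : Equiv.Perm (Fin n)} (hσ : σ ∈ topkFinset hk a) (hπ : π ∈ topkFinset hk a)
    {x y : Fin n} (h : x ∈ Set.range a ∨ y ∈ Set.range a) :
    σ⁻¹ x < σ⁻¹ y ↔ π⁻¹ x < π⁻¹ y := by
  by_cases hx : x ∈ Set.range a <;> by_cases hy : y ∈ Set.range a
  · obtain ⟨i, rfl⟩ := hx
    obtain ⟨j, rfl⟩ := hy
    simp only [inv_apply_of_mem_topkFinset hσ, inv_apply_of_mem_topkFinset hπ]
  · obtain ⟨i, rfl⟩ := hx
    have h₁ := le_inv_apply_of_mem_topkFinset hσ hy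
    have h₂ := le_inv_apply_of_mem_topkFinset hπ hy
    have hi := i.isLt
    simp only [inv_apply_of_mem_topkFinset hσ, inv_apply_of_mem_topkFinset hπ, Fin.lt_def,
      Fin.val_castLE]
    omega
  · obtain ⟨j, rfl⟩ := hy
    have h₁ := le_inv_apply_of_mem_topkFinset hσ hx
    have h₂ := le_inv_apply_of_mem_topkFinset hπ hx
    have hj := j.isLt
    simp only [inv_apply_of_mem_topkFinset hσ, inv_apply_of_mem_topkFinset hπ, Fin.lt_def,
      Fin.val_castLE]
    omega
  · exact absurd h (by tauto)

/-- An injective key on `Fin n` is put in increasing order by some permutation. -/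
theorem exists_perm_inv_lt_inv_iff {n : ℕ} {g : Fin n → ℕ} (hg : Function.Injective g) :
    ∃ π : Equiv.Perm (Fin n), ∀ x y, π⁻¹ x < π⁻¹ y ↔ g x < g y := by
  have hm : StrictMono (g ∘ Tuple.sort g) :=
    (Tuple.monotone_sort g).strictMono_of_injective (hg.comp (Tuple.sort g).injective)
  refine ⟨Tuple.sort g, fun x y => ?_⟩
  rw [← hm.lt_iff_lt]
  simp

/-- Every top-`k` partial ranking contains a ranking that orders the items outside the top `k`
as `τ` does. -/
theorem exists_mem_topkFinset_inv_lt_inv_iff {n k : ℕ} (hk : k ≤ n) {a : Fin k → Fin n}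
    (ha : Function.Injective a) (τ : Equiv.Perm (Fin n)) :
    ∃ π ∈ topkFinset hk a, ∀ x y, x ∉ Set.range a → y ∉ Set.range a →
      (π⁻¹ x < π⁻¹ y ↔ τ⁻¹ x < τ⁻¹ y) := by
  let g : Fin n → ℕ := Function.extend a (fun i => (i : ℕ)) (fun x => k + (τ⁻¹ x : ℕ))
  have hga : ∀ i, g (a i) = i := fun i => ha.extend_apply _ _ i
  have hgn : ∀ x, x ∉ Set.range a → g x = k + (τ⁻¹ x : ℕ) := fun x hx =>
    Function.extend_apply' _ _ x hx
  have hg_lt : ∀ {x : Fin n} {i : Fin k}, g x < i → ∃ j < i, a j = x := by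
    intro x i hxi
    by_cases hx : x ∈ Set.range a
    · obtain ⟨j, rfl⟩ := hx
      rw [hga] at hxi
      exact ⟨j, hxi, rfl⟩
    · rw [hgn x hx] at hxi
      omega
  have hg : Function.Injective g := by
    intro x y hxy
    by_cases hx : x ∈ Set.range a <;> by_cases hy : y ∈ Set.range a
    · obtain ⟨i, rfl⟩ := hx
      obtain ⟨j, rfl⟩ := hy
      rw [hga, hga] at hxy
      rw [Fin.ext hxy]
    · obtain ⟨i, rfl⟩ := hx
      rw [hga, hgn y hy] at hxy
      omega
    · obtain ⟨j, rfl⟩ := hy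
      rw [hga, hgn x hx] at hxy
      omega
    · rw [hgn x hx, hgn y hy] at hxy
      exact τ⁻¹.injective (Fin.ext (Nat.add_left_cancel hxy))
  obtain ⟨π, hπ⟩ := exists_perm_inv_lt_inv_iff hg
  refine ⟨π, mem_topkFinset.2 fun i => ?_, fun x y hx hy => ?_⟩
  · induction i using WellFoundedLT.induction with
    | ind i ih =>
    rcases lt_trichotomy (π⁻¹ (a i)) (Fin.castLE hk i) with h | h | h
    · have hj : (⟨π⁻¹ (a i), lt_trans h i.isLt⟩ : Fin k) < i := h
      have hai := ih _ hj
      rw [show Fin.castLE hk ⟨π⁻¹ (a i), lt_trans h i.isLt⟩ = π⁻¹ (a i) from rfl] at hai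
      exact absurd (ha ((π.apply_symm_apply (a i)).symm.trans hai)) hj.ne'
    · rw [← h, Equiv.Perm.coe_inv, Equiv.apply_symm_apply]
    · have hlt := (hπ (π (Fin.castLE hk i)) (a i)).1 (by simpa using h)
      rw [hga] at hlt
      obtain ⟨j, hj, hji⟩ := hg_lt hlt
      rw [← ih j hj, π.injective.eq_iff, Fin.castLE_inj] at hji
      exact absurd hji hj.ne
  · rw [hπ, hgn x hx, hgn y hy, Nat.add_lt_add_iff_left, Fin.lt_def]

/-- A permutation is determined by the relative order of all pairs `x < y` under its inverse. -/
theorem eq_of_forall_inv_lt_inv_iff {n : ℕ} {σ π : Equiv.Perm (Fin n)}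
    (h : ∀ x y, x < y → (σ⁻¹ x < σ⁻¹ y ↔ π⁻¹ x < π⁻¹ y)) : σ = π := by
  have h' : ∀ x y, π⁻¹ x < π⁻¹ y → σ⁻¹ x < σ⁻¹ y := by
    intro x y hxy
    rcases lt_trichotomy x y with hlt | rfl | hgt
    · exact (h x y hlt).2 hxy
    · exact absurd hxy (lt_irrefl _)
    · have hle : σ⁻¹ x ≤ σ⁻¹ y := not_lt.1 fun hc => hxy.asymm ((h y x hgt).1 hc)
      exact lt_of_le_of_ne hle (σ⁻¹.injective.ne hgt.ne')
  have hm : StrictMono (σ⁻¹ * π) := fun i j hij => h' (π i) (π j) (by simpa using hij)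
  have hid : ⇑(σ⁻¹ * π) = id := (hm.range_inj strictMono_id).1
    (by rw [(σ⁻¹ * π).surjective.range_eq, Set.range_id])
  exact inv_mul_eq_one.1 (Equiv.ext (congrFun hid))

/-- For a top-`k` partial ranking `R` (determined by distinct items) and any
`τ ∈ S_n`, there is a unique closest element of `R` to `τ` in Kendall
distance: the argmin set has exactly one element. -/
theorem exists_unique_closest {n k : ℕ} (hk : k ≤ n) (a : Fin k → Fin n)
    (ha : Function.Injective a) (τ : Equiv.Perm (Fin n)) :
    ∃! π : Equiv.Perm (Fin n), π ∈ topkFinset hk a ∧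
      ∀ σ ∈ topkFinset hk a, kendallDist π τ ≤ kendallDist σ τ := by
  obtain ⟨π, hπ, hord⟩ := exists_mem_topkFinset_inv_lt_inv_iff hk ha τ
  have hsub : ∀ σ ∈ topkFinset hk a,
      (Finset.univ.filter fun p : Fin n × Fin n =>
        p.1 < p.2 ∧ ¬((π⁻¹ p.1 < π⁻¹ p.2) ↔ (τ⁻¹ p.1 < τ⁻¹ p.2))) ⊆
      Finset.univ.filter fun p : Fin n × Fin n =>
        p.1 < p.2 ∧ ¬((σ⁻¹ p.1 < σ⁻¹ p.2) ↔ (τ⁻¹ p.1 < τ⁻¹ p.2)) := by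
    intro σ hσ p hp
    simp only [Finset.mem_filter, Finset.mem_univ, true_and] at hp ⊢
    by_cases h : p.1 ∈ Set.range a ∨ p.2 ∈ Set.range a
    · rwa [inv_lt_inv_iff_of_mem_topkFinset hσ hπ h]
    · rw [not_or] at h
      exact absurd (hord _ _ h.1 h.2) hp.2
  refine ⟨π, ⟨hπ, fun σ hσ => Finset.card_le_card (hsub σ hσ)⟩, ?_⟩
  rintro σ ⟨hσ, hmin⟩
  have heq := Finset.eq_of_subset_of_card_le (hsub σ hσ) (hmin π hπ)
  refine eq_of_forall_inv_lt_inv_iff fun x y hxy => ?_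
  have hmem := Finset.ext_iff.1 heq (x, y)
  simp only [Finset.mem_filter, Finset.mem_univ, true_and, hxy] at hmem
  tauto
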